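/- In the simple-sunflower reduction rule for an l_r-simply characterized ranking r-CSP: if S is the center of a simple sunflower {C₁, …, C_m} with m > k in an ordered instance R_σ, then every edition F of size at most k must edit S so that S becomes consistent with σ. -/

import Mathlib

/-- A ranking `r`-CSP constraint system on vertex set `V`. -/
structure RankingCSP (V : Type*) (r : ℕ) where
  sat : Finset V → (V → ℕ) → Prop
  invariant : ∀ S : Finset V, ∀ σ τ : V → ℕ,
    (∀ u ∈ S, ∀ v ∈ S, (σ u < σ v ↔ τ u < τ v)) → (sat S σ ↔ sat S τ)

/-- `C` is a conflict: no ranking of `C` satisfies all constraints on `r`-subsets of `C`. -/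
def IsConflict {V : Type*} {r : ℕ} (c : RankingCSP V r) (C : Finset V) : Prop :=
  ¬ ∃ σ : V → ℕ, Set.InjOn σ ↑C ∧ ∀ S ⊆ C, S.card = r → c.sat S σ

/-- In a sunflower of center `S` with more petals than `F` has members, some petal contains no
`S.card`-element member of `F` other than possibly `S` itself. -/
theorem exists_petal_unedited {V : Type*} [DecidableEq V] {m : ℕ} (S : Finset V)
    (C : Fin m → Finset V) (hpair : ∀ i j, i ≠ j → C i ∩ C j = S)
    (F : Finset (Finset V)) (hF : F.card < m) :
    ∃ i, ∀ T ⊆ C i, T.card = S.card → T ∈ F → T = S := by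
  by_contra! h
  choose T hTC hTcard hTF hTS using h
  obtain ⟨i, -, j, -, hij, hT⟩ := Finset.exists_ne_map_eq_of_card_lt_of_maps_to
    (s := Finset.univ) (t := F) (f := T) (by simpa using hF) (fun i _ => hTF i)
  refine hTS i (Finset.eq_of_subset_of_card_le ?_ (hTcard i).ge)
  rw [← hpair i j hij]
  exact Finset.subset_inter (hTC i) (hT ▸ hTC j)

/-- Soundness of the simple-sunflower rule for an `l_r`-simply characterized ranking
`r`-CSP `P`: if `S` is the center of a simple sunflower `{C 1, …, C m}` with `m > k` in an
instance `c` of `P` ordered under `σ`, then any edition `F` of size at most `k`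
(witnessed by the edited system `c' ∈ P` and a consistent ranking `ρ`) must edit `S` so
that `S` becomes consistent with `σ`. -/
theorem simple_sunflower_rule_sound
    {V : Type*} [Fintype V] [DecidableEq V] {r lr k m : ℕ}
    (hr : 2 ≤ r) (hrlr : r ≤ lr)
    (P : RankingCSP V r → Prop)
    -- P is l_r-simply characterized
    (hsimple : ∀ c, P c → ∀ σ : V → ℕ, Function.Injective σ →
      ∀ C : Finset V, C.card = lr →
      (∃! S : Finset V, S ⊆ C ∧ S.card = r ∧ ¬ c.sat S σ) → IsConflict c C)
    (c : RankingCSP V r) (hc : P c)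
    (σ : V → ℕ) (hσ : Function.Injective σ)
    (S : Finset V) (hS : S.card = r) (hSbad : ¬ c.sat S σ)
    -- the simple sunflower of center S
    (C : Fin m → Finset V) (hm : k < m)
    (hcard : ∀ i, (C i).card = lr)
    (hsub : ∀ i, S ⊆ C i)
    (hpair : ∀ i j, i ≠ j → C i ∩ C j = S)
    (hconf : ∀ i, IsConflict c (C i))
    (hsimpleSun : ∀ i, ∀ T ⊆ C i, T.card = r → ¬ c.sat T σ → T = S)
    -- the edition F of size at most k
    (F : Finset (Finset V)) (hF : F.card ≤ k)
    (c' : RankingCSP V r) (hc' : P c')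
    (hagree : ∀ T : Finset V, T ∉ F → c'.sat T = c.sat T)
    (ρ : V → ℕ) (hρ : Function.Injective ρ)
    (hcons : ∀ T : Finset V, T.card = r → c'.sat T ρ) :
    S ∈ F ∧ c'.sat S σ := by
  obtain ⟨i, hi⟩ := exists_petal_unedited S C hpair F (hF.trans_lt hm)
  rw [hS] at hi
  have hagree_petal : ∀ T ⊆ C i, T.card = r → T ≠ S → c'.sat T = c.sat T :=
    fun T hT hTr hTS => hagree T fun hTF => hTS (hi T hT hTr hTF)
  constructor
  · by_contra hSF
    refine hconf i ⟨ρ, hρ.injOn, fun T hT hTr => ?_⟩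
    rw [← hagree T fun hTF => hSF (hi T hT hTr hTF ▸ hTF)]
    exact hcons T hTr
  · by_contra hbad
    refine hsimple c' hc' σ hσ (C i) (hcard i) ⟨S, ⟨hsub i, hS, hbad⟩, ?_⟩
      ⟨ρ, hρ.injOn, fun T _ hTr => hcons T hTr⟩
    rintro T ⟨hT, hTr, hTbad⟩
    by_contra hTS
    rw [hagree_petal T hT hTr hTS] at hTbad
    exact hTS (hsimpleSun i T hT hTr hTbad)
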